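/- Fix q > 0, a ∈ ℝ³ ∖ {0} and ι ∈ {+1, −1}. Let x : I → ℝ³ be a C¹ curve with x(t) ≠ 0 and ρ(x(t),a) > 1 for all t ∈ I, solving the gradient flow x′(t) = ∇_x S_ι(x(t),a). Then, setting v(t) := ∇_x S_ι(x(t),a), the pair (x,v) is a C¹ solution of the repulsive Kepler ODE dx/dt = v, dv/dt = (q/2)·x/|x|³, and its energy satisfies |v(t)|² + q/|x(t)| = |a|² for all t ∈ I. -/

import Mathlib

/-! For fixed `a`, the function `S = S_ι(·, a)` is built from the parabolic coordinates
`ξ, η = |x||a| ± x·a`, whose gradients are orthogonal with `|∇ξ|² = 2|a|ξ/|x|` and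
`|∇η|² = 2|a|η/|x|`. As `K'(s) = √(1 - 1/s)`, one gets `∇S = (ι √(1 - 1/ρ) ∇ξ - ∇η) / 2`, so `S`
solves the Hamilton–Jacobi equation `|∇S|² + q/|x| = |a|²` on `{ρ > 1}`: the energy identity.
Differentiating that equation, symmetry of the Hessian gives `v' = D²S(∇S) = ∇|∇S|²/2 = -∇(q/|x|)/2`
along `x' = ∇S = v`. -/

open scoped RealInnerProductSpace

noncomputable section

/-- Euclidean three-space. -/
abbrev R3 : Type := EuclideanSpace ℝ (Fin 3)

/-- `ρ(x,a) = (|a|/(2q))(|x||a| + x·a)`. -/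
def rhoF (q : ℝ) (x a : R3) : ℝ := ‖a‖ / (2 * q) * (‖x‖ * ‖a‖ + ⟪x, a⟫)

/-- `K(s) = √(s(s−1)) − ln(√s + √(s−1))`. -/
def KF (s : ℝ) : ℝ := Real.sqrt (s * (s - 1)) - Real.log (Real.sqrt s + Real.sqrt (s - 1))

/-- The generating function `S_ι(x,a) = ι·(q/|a|)·K(ρ(x,a)) − (|x||a| − x·a)/2`. -/
def Sgen (q ι : ℝ) (x a : R3) : ℝ :=
  ι * (q / ‖a‖) * KF (rhoF q x a) - (‖x‖ * ‖a‖ - ⟪x, a⟫) / 2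

section GeneralDimension

open InnerProductSpace
open scoped Gradient Topology

variable {E : Type*} [NormedAddCommGroup E] [InnerProductSpace ℝ E]

section HamiltonJacobi

variable [CompleteSpace E] {S : E → ℝ} {p : E}

theorem differentiableAt_gradient (hS : ContDiffAt ℝ 2 S p) : DifferentiableAt ℝ (∇ S) p :=
  (toDual ℝ E).symm.toContinuousLinearEquiv.differentiableAt.comp p
    ((hS.fderiv_right (m := 1) le_rfl).differentiableAt one_ne_zero)

theorem inner_fderiv_gradient (S : E → ℝ) (p u w : E) :
    ⟪fderiv ℝ (∇ S) p u, w⟫ = fderiv ℝ (fderiv ℝ S) p u w := by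
  have h : fderiv ℝ (∇ S) p = (toDual ℝ E).symm.toContinuousLinearEquiv.toContinuousLinearMap ∘L
      fderiv ℝ (fderiv ℝ S) p :=
    (toDual ℝ E).symm.toContinuousLinearEquiv.comp_fderiv
  rw [h]
  exact toDual_symm_apply

theorem inner_fderiv_gradient_comm (hS : ContDiffAt ℝ 2 S p) (u w : E) :
    ⟪fderiv ℝ (∇ S) p u, w⟫ = ⟪fderiv ℝ (∇ S) p w, u⟫ := by
  rw [inner_fderiv_gradient, inner_fderiv_gradient]
  exact (hS.isSymmSndFDerivAt (by simp)).eq u w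

theorem hasGradientAt_norm_gradient_sq (hS : ContDiffAt ℝ 2 S p) :
    HasGradientAt (fun y => ‖∇ S y‖ ^ 2) ((2 : ℝ) • fderiv ℝ (∇ S) p (∇ S p)) p := by
  rw [hasGradientAt_iff_hasFDerivAt]
  refine (differentiableAt_gradient hS).hasFDerivAt.norm_sq.congr_fderiv ?_
  ext u
  simp [inner_fderiv_gradient_comm hS (∇ S p) u]

theorem hasDerivWithinAt_gradient_of_hamiltonJacobi {V : E → ℝ} {g : E} {c : ℝ} {x : ℝ → E}
    {I : Set ℝ} {t : ℝ} (hS : ContDiffAt ℝ 2 S (x t))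
    (hHJ : ∀ᶠ y in 𝓝 (x t), ‖∇ S y‖ ^ 2 + V y = c) (hV : HasGradientAt V g (x t))
    (hx : HasDerivWithinAt x (∇ S (x t)) I t) :
    HasDerivWithinAt (fun s => ∇ S (x s)) (-(1 / 2 : ℝ) • g) I t := by
  have hkinetic : HasGradientAt (fun y => ‖∇ S y‖ ^ 2) (-g) (x t) := by
    have hsub : HasGradientAt (fun y => c - V y) (-g) (x t) := by
      simpa only [hasGradientAt_iff_hasFDerivAt, map_neg] using hV.hasFDerivAt.const_sub c
    exact hsub.congr_of_eventuallyEq (hHJ.mono fun y hy => eq_sub_of_add_eq hy)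
  have hHess : (2 : ℝ) • fderiv ℝ (∇ S) (x t) (∇ S (x t)) = -g :=
    (hasGradientAt_norm_gradient_sq hS).unique hkinetic
  refine ((differentiableAt_gradient hS).hasFDerivAt.comp_hasDerivWithinAt t hx).congr_deriv ?_
  rw [neg_smul, ← smul_neg, ← hHess, smul_smul]
  norm_num

end HamiltonJacobi

section RadialFunctions

variable [CompleteSpace E] {x : E}

theorem hasGradientAt_norm (hx : x ≠ 0) : HasGradientAt (fun y : E => ‖y‖) (‖x‖⁻¹ • x) x := by
  have hr : ‖x‖ ≠ 0 := norm_ne_zero_iff.2 hx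
  have h := ((hasStrictFDerivAt_norm_sq x).hasFDerivAt).sqrt (pow_ne_zero 2 hr)
  simp only [Real.sqrt_sq (norm_nonneg _)] at h
  refine hasGradientAt_iff_hasFDerivAt.2 (h.congr_fderiv ?_)
  rw [← Nat.cast_smul_eq_nsmul ℝ, smul_smul, map_smul]
  congr 1
  push_cast
  field_simp

theorem hasGradientAt_const_div_norm (q : ℝ) (hx : x ≠ 0) :
    HasGradientAt (fun y : E => q / ‖y‖) (-(q / ‖x‖ ^ 3) • x) x := by
  have hr : ‖x‖ ≠ 0 := norm_ne_zero_iff.2 hx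
  have h := ((hasDerivAt_inv hr).const_mul q).comp_hasFDerivAt x (hasGradientAt_norm hx).hasFDerivAt
  refine hasGradientAt_iff_hasFDerivAt.2 (h.congr_fderiv ?_)
  rw [← map_smul, smul_smul]
  congr 2
  field_simp

end RadialFunctions

section KFunction

variable {s : ℝ}

theorem hasDerivAt_KF (hs : 1 < s) : HasDerivAt KF √(1 - s⁻¹) s := by
  have hs0 : 0 < s := by linarith
  have hs1 : 0 < s - 1 := by linarith
  have hu : 0 < √s := Real.sqrt_pos.2 hs0
  have hz : 0 < √(s - 1) := Real.sqrt_pos.2 hs1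
  have hsub : HasDerivAt (fun s : ℝ => s - 1) 1 s := (hasDerivAt_id' s).sub_const 1
  have hsqrt := ((hasDerivAt_id' s).fun_mul hsub).sqrt (mul_pos hs0 hs1).ne'
  have hlog := (((hasDerivAt_id' s).sqrt hs0.ne').fun_add (hsub.sqrt hs1.ne')).log
    (add_pos hu hz).ne'
  refine (hsqrt.fun_sub hlog).congr_deriv ?_
  have hquot : √(1 - s⁻¹) = √(s - 1) / √s := by
    rw [← Real.sqrt_div hs1.le, sub_div, div_self hs0.ne', one_div]
  have hu2 : √s ^ 2 = s := Real.sq_sqrt hs0.le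
  have hz2 : √(s - 1) ^ 2 = √s ^ 2 - 1 := by rw [hu2, Real.sq_sqrt hs1.le]
  rw [hquot, Real.sqrt_mul hs0.le]
  field_simp
  linear_combination (√s + √(s - 1)) * (-2 * hz2 - 2 * hu2)

theorem contDiffAt_KF {n : WithTop ℕ∞} (hs : 1 < s) : ContDiffAt ℝ n KF s := by
  have hs0 : 0 < s := by linarith
  have hs1 : 0 < s - 1 := by linarith
  have hsub : ContDiffAt ℝ n (fun s : ℝ => s - 1) s := contDiffAt_id.sub contDiffAt_const
  have hsqrt := (contDiffAt_id.mul hsub).sqrt (mul_pos hs0 hs1).ne'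
  exact hsqrt.sub (((contDiffAt_id.sqrt hs0.ne').add (hsub.sqrt hs1.ne')).log
    (add_pos (Real.sqrt_pos.2 hs0) (Real.sqrt_pos.2 hs1)).ne')

end KFunction

/-- The parabolic coordinate `|x||a| + x·a` with axis `a`; its companion `|x||a| - x·a` is the
coordinate with axis `-a`. -/
def parabolicCoord (a x : E) : ℝ := ‖x‖ * ‖a‖ + ⟪x, a⟫

/-- The variable `ρ(x,a)` of `rhoF`, in an arbitrary inner product space. -/
def parabolicRho (q : ℝ) (a x : E) : ℝ := ‖a‖ / (2 * q) * parabolicCoord a x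

/-- The generating function `S_ι(x,a)` of `Sgen` in an arbitrary inner product space, as a function
of `x` separated into the two parabolic coordinates. -/
def keplerGen (q ι : ℝ) (a x : E) : ℝ :=
  ι * (q / ‖a‖) * KF (parabolicRho q a x) - parabolicCoord (-a) x / 2

theorem Sgen_eq_keplerGen (q ι : ℝ) (a : R3) : (fun y => Sgen q ι y a) = keplerGen q ι a := by
  funext y
  simp only [Sgen, keplerGen, rhoF, parabolicRho, parabolicCoord, norm_neg, inner_neg_right,
    sub_eq_add_neg]

section ParabolicCoord

variable {a x : E}

theorem parabolicCoord_add_parabolicCoord_neg (a x : E) :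
    parabolicCoord a x + parabolicCoord (-a) x = 2 * (‖x‖ * ‖a‖) := by
  simp only [parabolicCoord, norm_neg, inner_neg_right]
  ring

theorem contDiffAt_parabolicCoord {n : WithTop ℕ∞} (a : E) (hx : x ≠ 0) :
    ContDiffAt ℝ n (parabolicCoord a) x :=
  ((contDiffAt_norm ℝ hx).mul contDiffAt_const).add (contDiffAt_id.inner ℝ contDiffAt_const)

theorem continuous_parabolicRho (q : ℝ) (a : E) : Continuous (parabolicRho q a) := by
  unfold parabolicRho parabolicCoord
  fun_prop

theorem ne_zero_of_one_lt_parabolicRho {q : ℝ} (hρ : 1 < parabolicRho q a x) :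
    q ≠ 0 ∧ a ≠ 0 ∧ x ≠ 0 := by
  -- For `q = 0` the convention `|a| / 0 = 0` gives `ρ = 0`.
  refine ⟨?_, ?_, ?_⟩ <;> rintro rfl <;> norm_num [parabolicRho, parabolicCoord] at hρ

variable [CompleteSpace E]

theorem hasGradientAt_parabolicCoord (a : E) (hx : x ≠ 0) :
    HasGradientAt (parabolicCoord a) ((‖a‖ / ‖x‖) • x + a) x := by
  have hinner : HasFDerivAt (fun y => ⟪y, a⟫) (toDual ℝ E a) x := by
    simp_rw [real_inner_comm a]
    exact (toDual ℝ E a).hasFDerivAt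
  refine hasGradientAt_iff_hasFDerivAt.2
    ((((hasGradientAt_norm hx).hasFDerivAt.mul_const ‖a‖).fun_add hinner).congr_fderiv ?_)
  rw [← map_smul, ← map_add, smul_smul, div_eq_mul_inv]

theorem norm_gradient_parabolicCoord_sq (a : E) (hx : x ≠ 0) :
    ‖∇ (parabolicCoord a) x‖ ^ 2 = 2 * (‖a‖ / ‖x‖) * parabolicCoord a x := by
  have hr : ‖x‖ ≠ 0 := norm_ne_zero_iff.2 hx
  rw [(hasGradientAt_parabolicCoord a hx).gradient, norm_add_sq_real, norm_smul,
    real_inner_smul_left, Real.norm_of_nonneg (by positivity), div_mul_cancel₀ _ hr, parabolicCoord]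
  field_simp
  ring

theorem inner_gradient_parabolicCoord_neg (a : E) (hx : x ≠ 0) :
    ⟪∇ (parabolicCoord a) x, ∇ (parabolicCoord (-a)) x⟫ = 0 := by
  have hr : ‖x‖ ≠ 0 := norm_ne_zero_iff.2 hx
  rw [(hasGradientAt_parabolicCoord a hx).gradient, (hasGradientAt_parabolicCoord (-a) hx).gradient,
    norm_neg, ← sub_eq_add_neg, real_inner_add_sub_eq_zero_iff, norm_smul,
    Real.norm_of_nonneg (by positivity), div_mul_cancel₀ _ hr]

end ParabolicCoord

section KeplerGen

variable {q ι : ℝ} {a x : E}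

theorem contDiffAt_keplerGen {n : WithTop ℕ∞} (ι : ℝ) (hρ : 1 < parabolicRho q a x) :
    ContDiffAt ℝ n (keplerGen q ι a) x := by
  obtain ⟨-, -, hx⟩ := ne_zero_of_one_lt_parabolicRho hρ
  have hρ' : ContDiffAt ℝ n (parabolicRho q a) x :=
    contDiffAt_const.mul (contDiffAt_parabolicCoord a hx)
  exact (contDiffAt_const.mul ((contDiffAt_KF hρ).comp x hρ')).sub
    ((contDiffAt_parabolicCoord (-a) hx).div_const 2)

variable [CompleteSpace E]

theorem gradient_keplerGen (ι : ℝ) (hρ : 1 < parabolicRho q a x) :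
    ∇ (keplerGen q ι a) x = (1 / 2 : ℝ) •
      ((ι * √(1 - (parabolicRho q a x)⁻¹)) • ∇ (parabolicCoord a) x -
        ∇ (parabolicCoord (-a)) x) := by
  obtain ⟨hq, ha, hx⟩ := ne_zero_of_one_lt_parabolicRho hρ
  have hA : ‖a‖ ≠ 0 := norm_ne_zero_iff.2 ha
  have hξ (b : E) : HasFDerivAt (parabolicCoord b) (toDual ℝ E (∇ (parabolicCoord b) x)) x :=
    (hasGradientAt_parabolicCoord b hx).differentiableAt.hasGradientAt.hasFDerivAt
  have hK := (hasDerivAt_KF hρ).comp_hasFDerivAt x ((hξ a).const_mul (‖a‖ / (2 * q)))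
  have hS := (hK.const_mul (ι * (q / ‖a‖))).sub ((hξ (-a)).mul_const (2⁻¹ : ℝ))
  refine HasGradientAt.gradient (hasGradientAt_iff_hasFDerivAt.2 (hS.congr_fderiv ?_))
  simp only [← map_smul, ← map_sub]
  congr 1
  match_scalars
  · field_simp
  · norm_num

theorem norm_gradient_keplerGen_sq_add (hι : ι ^ 2 = 1) (hρ : 1 < parabolicRho q a x) :
    ‖∇ (keplerGen q ι a) x‖ ^ 2 + q / ‖x‖ = ‖a‖ ^ 2 := by
  obtain ⟨hq, ha, hx⟩ := ne_zero_of_one_lt_parabolicRho hρ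
  have hA : ‖a‖ ≠ 0 := norm_ne_zero_iff.2 ha
  have hr : ‖x‖ ≠ 0 := norm_ne_zero_iff.2 hx
  have hw : √(1 - (parabolicRho q a x)⁻¹) ^ 2 = 1 - (parabolicRho q a x)⁻¹ :=
    Real.sq_sqrt (sub_nonneg.2 (inv_le_one_of_one_le₀ hρ.le))
  have hξ : (parabolicRho q a x)⁻¹ * parabolicCoord a x = 2 * q / ‖a‖ := by
    have hξ0 : parabolicCoord a x ≠ 0 := right_ne_zero_of_mul (zero_lt_one.trans hρ).ne'
    rw [parabolicRho]
    field_simp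
  have hη := parabolicCoord_add_parabolicCoord_neg a x
  set w := √(1 - (parabolicRho q a x)⁻¹)
  calc ‖∇ (keplerGen q ι a) x‖ ^ 2 + q / ‖x‖
      = 1 / 4 * (w ^ 2 * ‖∇ (parabolicCoord a) x‖ ^ 2 + ‖∇ (parabolicCoord (-a)) x‖ ^ 2)
          + q / ‖x‖ := by
        rw [gradient_keplerGen ι hρ, norm_smul, mul_pow, norm_sub_sq_real, norm_smul, mul_pow,
          real_inner_smul_left, inner_gradient_parabolicCoord_neg a hx, Real.norm_eq_abs,
          Real.norm_eq_abs, sq_abs, sq_abs, mul_pow, hι]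
        ring
    _ = ‖a‖ / (2 * ‖x‖) * (parabolicCoord a x + parabolicCoord (-a) x
          - (parabolicRho q a x)⁻¹ * parabolicCoord a x) + q / ‖x‖ := by
        rw [norm_gradient_parabolicCoord_sq a hx, norm_gradient_parabolicCoord_sq (-a) hx, norm_neg,
          hw]
        ring
    _ = ‖a‖ ^ 2 := by
        rw [hξ, hη]
        field_simp
        ring

end KeplerGen

theorem generating_function_gradient_flow_is_kepler_general [CompleteSpace E] {q ι : ℝ}
    (hι : ι ^ 2 = 1) {a : E} {I : Set ℝ} {x : ℝ → E} {t : ℝ} (hρ : 1 < parabolicRho q a (x t))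
    (hx : HasDerivWithinAt x (∇ (keplerGen q ι a) (x t)) I t) :
    HasDerivWithinAt (fun s => ∇ (keplerGen q ι a) (x s)) ((q / 2 / ‖x t‖ ^ 3) • x t) I t ∧
      ‖∇ (keplerGen q ι a) (x t)‖ ^ 2 + q / ‖x t‖ = ‖a‖ ^ 2 := by
  obtain ⟨-, -, hx0⟩ := ne_zero_of_one_lt_parabolicRho hρ
  have hHJ : ∀ᶠ y in 𝓝 (x t), ‖∇ (keplerGen q ι a) y‖ ^ 2 + q / ‖y‖ = ‖a‖ ^ 2 :=
    ((continuous_parabolicRho q a).continuousAt.eventually_const_lt hρ).mono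
      fun _ hy => norm_gradient_keplerGen_sq_add hι hy
  refine ⟨?_, norm_gradient_keplerGen_sq_add hι hρ⟩
  convert hasDerivWithinAt_gradient_of_hamiltonJacobi (contDiffAt_keplerGen ι hρ) hHJ
    (hasGradientAt_const_div_norm q hx0) hx using 1
  rw [smul_smul]
  ring_nf

end GeneralDimension

/-- If a `C¹` curve `x` in the region `{x ≠ 0, ρ(x,a) > 1}` solves the gradient flow
`x' = ∇ₓ S_ι(x,a)`, then with `v(t) := ∇ₓ S_ι(x(t),a)` the pair `(x,v)` is a `C¹`
solution of the repulsive Kepler ODE `x' = v`, `v' = (q/2)·x/|x|³`, with energy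
`|v(t)|² + q/|x(t)| = |a|²`. -/
theorem generating_function_gradient_flow_is_kepler (q : ℝ) (hq : 0 < q)
    (ι : ℝ) (hι : ι = 1 ∨ ι = -1) (a : R3) (ha : a ≠ 0)
    (I : Set ℝ) (hI : Convex ℝ I) (x : ℝ → R3)
    (hx0 : ∀ t ∈ I, x t ≠ 0)
    (hρ : ∀ t ∈ I, 1 < rhoF q (x t) a)
    (hx : ∀ t ∈ I, HasDerivWithinAt x (gradient (fun y => Sgen q ι y a) (x t)) I t) :
    ∀ t ∈ I,
      HasDerivWithinAt x (gradient (fun y => Sgen q ι y a) (x t)) I t ∧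
      HasDerivWithinAt (fun s => gradient (fun y => Sgen q ι y a) (x s))
        ((q / 2 / ‖x t‖ ^ 3) • x t) I t ∧
      ‖gradient (fun y => Sgen q ι y a) (x t)‖ ^ 2 + q / ‖x t‖ = ‖a‖ ^ 2 := by
  rw [Sgen_eq_keplerGen] at hx ⊢
  exact fun t ht => ⟨hx t ht, generating_function_gradient_flow_is_kepler_general
    (sq_eq_one_iff.2 hι) (hρ t ht) (hx t ht)⟩
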